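/- For every integer k ≥ 1, the formal power series ∑_{n=1}^∞ a_{n,k}·qⁿ ∈ ℚ[[q]] lies in the ℚ-subalgebra of ℚ[[q]] generated by the three quasi-modular forms E_2 = 1 − 24·∑_{n=1}^∞ σ_1(n)qⁿ, E_4 = 1 + 240·∑_{n=1}^∞ σ_3(n)qⁿ, and E_6 = 1 − 504·∑_{n=1}^∞ σ_5(n)qⁿ. (Equivalently, MacMahon's function A_k is a quasi-modular form.) -/

import Mathlib

open scoped Classical

/-- MacMahon's generalized divisor sum `a_{n,k} = ∑ s₁ ⋯ s_k`, summed over all ways of writing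
`n = s₁ m₁ + ⋯ + s_k m_k` with `0 < m₁ < m₂ < ⋯ < m_k` and all `sᵢ > 0`.  (All the `sᵢ` and
`mᵢ` occurring in such a representation are at most `n`, so we may index by `Fin (n+1)`.) -/
noncomputable def macAcoeff (n k : ℕ) : ℕ :=
  ∑ p ∈ Finset.univ.filter
      (fun p : (Fin k → Fin (n + 1)) × (Fin k → Fin (n + 1)) =>
        (∀ i, 0 < (p.1 i : ℕ)) ∧ StrictMono (fun i => (p.2 i : ℕ)) ∧ (∀ i, 0 < (p.2 i : ℕ)) ∧
          ∑ i, (p.1 i : ℕ) * (p.2 i : ℕ) = n),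
    ∏ i, (p.1 i : ℕ)

/-- The sum of the `j`-th powers of the divisors of `n`. -/
def sigma' (j n : ℕ) : ℚ := ∑ d ∈ n.divisors, (d : ℚ) ^ j

/-- The quasi-modular Eisenstein series `E₂ = 1 - 24 ∑ σ₁(n) qⁿ`. -/
noncomputable def E2 : PowerSeries ℚ :=
  PowerSeries.mk fun n => if n = 0 then 1 else -24 * sigma' 1 n

/-- The Eisenstein series `E₄ = 1 + 240 ∑ σ₃(n) qⁿ`. -/
noncomputable def E4 : PowerSeries ℚ :=
  PowerSeries.mk fun n => if n = 0 then 1 else 240 * sigma' 3 n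

/-- The Eisenstein series `E₆ = 1 - 504 ∑ σ₅(n) qⁿ`. -/
noncomputable def E6 : PowerSeries ℚ :=
  PowerSeries.mk fun n => if n = 0 then 1 else -504 * sigma' 5 n

/-!
The series `A_k` is the `k`-th elementary symmetric function of `u_m = q^m / (1 - q^m)^2`, `m ≥ 1`,
so by Newton's identities it suffices to treat the power sums `∑ₘ u_m^(k+1)`. These are the Lambert
series of `s ↦ (s + k).choose (2k + 1)`, an odd polynomial in `s`, hence linear combinations of the
series `G_r = ∑ σ_r(n) qⁿ` with `r` odd.

That `G_r` is a polynomial in `E₂, E₄, E₆` for every odd `r` is shown without modular forms, by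
induction. For a form `P` of even degree `N` with `P(x, y) = P(x, -(x + y)) = P(x + y, -y)` and
`P(x, -x) = 0`, one step of the Euclidean algorithm on the representations `n = a x + b y` yields

  `∑ (P(a, b) - P(a, -b)) = ∑_{d ∣ n} ∑_{0 < a < d} P(a, -d)`.

The left side is the coefficient of `qⁿ` in a combination of products `G_i G_j` with `i`, `j` odd
and `i + j = N`. By Faulhaber's formula the right side is that of
`(∫₀¹ P(t, -1) dt) G_{N+1}` plus a combination of the lower `G_r` with `r` odd, and the integral is
positive for `P = x² y² (x + y)² (x² + x y + y²)ᵐ`.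
-/

section LambertSeries

open Finset PowerSeries

/-- The Lambert series `∑ f(d) q^d / (1 - q^d)`, that is, the generating function of
`n ↦ ∑_{d ∣ n} f(d)`, as a linear map in `f`. The value `f 0` is ignored. -/
noncomputable def lambert {R : Type*} [CommSemiring R] : (ℕ → R) →ₗ[R] R⟦X⟧ where
  toFun f := .mk fun n => ∑ d ∈ n.divisors, f d
  map_add' f g := by ext n; simp [sum_add_distrib]
  map_smul' c f := by ext n; simp [mul_sum]

lemma coeff_lambert {R : Type*} [CommSemiring R] (f : ℕ → R) (n : ℕ) :
    coeff n (lambert f) = ∑ d ∈ n.divisors, f d := by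
  simp [lambert]

/-- The Eisenstein series `∑ σ_r(n) qⁿ` without its constant term and normalisation. -/
noncomputable def sigmaSeries (r : ℕ) : ℚ⟦X⟧ := lambert fun d => (d : ℚ) ^ r

/-- The representations `n = a x + b y` in positive integers, encoded as `((a, x), (b, y))`. -/
def bilinearReps (n : ℕ) : Finset ((ℕ × ℕ) × (ℕ × ℕ)) :=
  (antidiagonal n).biUnion fun p => p.1.divisorsAntidiagonal ×ˢ p.2.divisorsAntidiagonal

lemma mem_bilinearReps {n a x b y : ℕ} :
    ((a, x), (b, y)) ∈ bilinearReps n ↔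
      (0 < a ∧ 0 < x) ∧ (0 < b ∧ 0 < y) ∧ a * x + b * y = n := by
  simp only [bilinearReps, mem_biUnion, HasAntidiagonal.mem_antidiagonal, mem_product,
    Nat.mem_divisorsAntidiagonal, Prod.exists]
  constructor
  · rintro ⟨_, _, hn, ⟨rfl, hax⟩, rfl, hby⟩
    simp only [mul_ne_zero_iff, ← Nat.pos_iff_ne_zero] at hax hby
    exact ⟨hax, hby, hn⟩
  · rintro ⟨⟨ha, hx⟩, ⟨hb, hy⟩, hn⟩
    exact ⟨_, _, hn, ⟨rfl, by positivity⟩, rfl, by positivity⟩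

lemma coeff_lambert_mul_lambert {R : Type*} [CommSemiring R] (f g : ℕ → R) (n : ℕ) :
    coeff n (lambert f * lambert g) = ∑ q ∈ bilinearReps n, f q.1.1 * g q.2.1 := by
  rw [coeff_mul, bilinearReps, sum_biUnion]
  · refine sum_congr rfl fun p _ => ?_
    rw [coeff_lambert, coeff_lambert, sum_product,
      ← Nat.sum_divisorsAntidiagonal fun a _ => f a, ← Nat.sum_divisorsAntidiagonal fun b _ => g b,
      sum_mul_sum]
  · rintro ⟨u, v⟩ - ⟨u', v'⟩ - hne
    rw [Function.onFun, disjoint_left]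
    rintro ⟨⟨a, x⟩, b, y⟩ h h'
    simp only [mem_product, Nat.mem_divisorsAntidiagonal] at h h'
    grind

variable {M : Type*} [AddCommMonoid M]

lemma sum_bilinearReps_swap (n : ℕ) (F : (ℕ × ℕ) × (ℕ × ℕ) → M) :
    ∑ q ∈ bilinearReps n, F q.swap = ∑ q ∈ bilinearReps n, F q := by
  refine sum_nbij' Prod.swap Prod.swap ?_ ?_ (by simp) (by simp) (by simp) <;>
  · rintro ⟨⟨a, x⟩, b, y⟩ h
    rw [Prod.swap_prod_mk, mem_bilinearReps]
    rw [mem_bilinearReps] at h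
    exact ⟨h.2.1, h.1, by rw [add_comm, h.2.2]⟩

lemma sum_bilinearReps_snd_gt (n : ℕ) (H : ℕ → ℕ → M) :
    ∑ q ∈ bilinearReps n with q.2.2 < q.1.2, H q.1.1 (q.1.1 + q.2.1) =
      ∑ q ∈ bilinearReps n with q.1.1 < q.2.1, H q.1.1 q.2.1 := by
  refine sum_nbij' (fun q => ((q.1.1, q.1.2 - q.2.2), (q.1.1 + q.2.1, q.2.2)))
    (fun q => ((q.1.1, q.1.2 + q.2.2), (q.2.1 - q.1.1, q.2.2))) ?_ ?_ ?_ ?_ (by simp)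
  all_goals
    rintro ⟨⟨a, x⟩, b, y⟩ h
    simp only [mem_filter, mem_bilinearReps] at h ⊢
    obtain ⟨⟨⟨ha, hx⟩, ⟨hb, hy⟩, hn⟩, hlt⟩ := h
  · refine ⟨⟨⟨ha, by lia⟩, ⟨by lia, hy⟩, ?_⟩, by lia⟩
    obtain ⟨t, rfl⟩ := Nat.exists_eq_add_of_le hlt.le
    rw [Nat.add_sub_cancel_left, ← hn]
    ring
  · refine ⟨⟨⟨ha, by lia⟩, ⟨by lia, hy⟩, ?_⟩, by lia⟩
    obtain ⟨t, rfl⟩ := Nat.exists_eq_add_of_le hlt.le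
    rw [Nat.add_sub_cancel_left, ← hn]
    ring
  · simp [Nat.sub_add_cancel hlt.le]
  · simp [Nat.add_sub_cancel' hlt.le]

lemma sum_bilinearReps_snd_lt (n : ℕ) (H : ℕ → ℕ → M) :
    ∑ q ∈ bilinearReps n with q.1.2 < q.2.2, H (q.1.1 + q.2.1) q.2.1 =
      ∑ q ∈ bilinearReps n with q.2.1 < q.1.1, H q.1.1 q.2.1 := by
  have h := sum_bilinearReps_snd_gt n fun a b => H b a
  simp only [sum_filter] at h ⊢
  rw [← sum_bilinearReps_swap, ← sum_bilinearReps_swap n fun q => if q.2.1 < q.1.1 then _ else _]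
  simpa only [Prod.fst_swap, Prod.snd_swap, add_comm] using h

lemma sum_bilinearReps_snd_eq (n : ℕ) (H : ℕ → ℕ → M) :
    ∑ q ∈ bilinearReps n with q.1.2 = q.2.2, H q.1.1 (q.1.1 + q.2.1) =
      ∑ d ∈ n.divisors, ∑ a ∈ Ico 1 d, H a d := by
  rw [sum_sigma']
  refine sum_bij' (fun q _ => ⟨q.1.1 + q.2.1, q.1.1⟩)
    (fun p _ => ((p.2, n / p.1), (p.1 - p.2, n / p.1))) ?_ ?_ ?_ ?_ (by simp)
  · rintro ⟨⟨a, x⟩, b, y⟩ h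
    simp only [mem_filter, mem_bilinearReps] at h
    obtain ⟨⟨⟨ha, hx⟩, ⟨hb, -⟩, hn⟩, rfl⟩ := h
    rw [← add_mul] at hn
    simp only [mem_sigma, Nat.mem_divisors, mem_Ico]
    exact ⟨⟨⟨x, hn.symm⟩, by rw [← hn]; positivity⟩, by lia⟩
  · rintro ⟨d, a⟩ h
    simp only [mem_sigma, Nat.mem_divisors, mem_Ico] at h
    obtain ⟨⟨hd, hn⟩, ha, had⟩ := h
    have hpos : 0 < n / d := Nat.div_pos (Nat.le_of_dvd (by lia) hd) (by lia)
    simp only [mem_filter, mem_bilinearReps, and_true]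
    refine ⟨⟨ha, hpos⟩, ⟨by lia, hpos⟩, ?_⟩
    rw [← add_mul, Nat.add_sub_cancel' had.le, Nat.mul_div_cancel' hd]
  · rintro ⟨⟨a, x⟩, b, y⟩ h
    simp only [mem_filter, mem_bilinearReps] at h
    obtain ⟨⟨⟨ha, -⟩, -, rfl⟩, rfl⟩ := h
    simp [← add_mul, Nat.mul_div_cancel_left x (show 0 < a + b by lia)]
  · rintro ⟨d, a⟩ h
    simp only [mem_sigma, mem_Ico] at h
    simp [Nat.add_sub_cancel' h.2.2.le]

-- The Euclidean steps `(a, x, b, y) ↦ (a, x - y, a + b, y)` and `(a + b, x, b, y - x)` preserve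
-- `a x + b y` and match the representations with `x ≠ y` on the left with those with `a ≠ b` on
-- the right.
lemma sum_bilinearReps_eq_add (n : ℕ) (F H : ℕ → ℕ → M) (hr : ∀ a b, F a b = H a (a + b))
    (hl : ∀ a b, F a b = H (a + b) b) (h0 : ∀ a, H a a = 0) :
    ∑ q ∈ bilinearReps n, F q.1.1 q.2.1 =
      ∑ q ∈ bilinearReps n, H q.1.1 q.2.1 + ∑ d ∈ n.divisors, ∑ a ∈ Ico 1 d, H a d := by
  have split (u v : (ℕ × ℕ) × (ℕ × ℕ) → ℕ) (G : (ℕ × ℕ) × (ℕ × ℕ) → M) :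
      ∑ q ∈ bilinearReps n, G q = ∑ q ∈ bilinearReps n with u q < v q, G q +
        ∑ q ∈ bilinearReps n with v q < u q, G q + ∑ q ∈ bilinearReps n with u q = v q, G q := by
    simp only [sum_filter, ← sum_add_distrib]
    refine sum_congr rfl fun q _ => ?_
    rcases lt_trichotomy (u q) (v q) with h | h | h <;>
      simp [h, h.not_gt, LT.lt.ne, LT.lt.ne']
  have diag : ∑ q ∈ bilinearReps n with q.1.1 = q.2.1, H q.1.1 q.2.1 = 0 :=
    sum_eq_zero fun q hq => by rw [(mem_filter.mp hq).2, h0]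
  rw [split (·.1.2) (·.2.2) fun q => F q.1.1 q.2.1, split (·.1.1) (·.2.1) fun q => H q.1.1 q.2.1,
    diag, add_zero, add_comm (∑ q ∈ bilinearReps n with q.1.1 < q.2.1, _)]
  conv_lhs => enter [1, 1]; simp only [hl]
  conv_lhs => enter [1, 2]; simp only [hr]
  conv_lhs => enter [2]; simp only [hr]
  rw [sum_bilinearReps_snd_lt, sum_bilinearReps_snd_gt, sum_bilinearReps_snd_eq]

end LambertSeries

section TrapezoidalPowerSums

open Finset

/-- The trapezoidal sum `0^i / 2 + 1^i + ⋯ + (d - 1)^i + d^i / 2`, written as the average of the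
left and right Riemann sums, so that it is `0` at `d = 0` and `d` at `i = 0`. -/
def trapezoidalPowerSum (i d : ℕ) : ℚ :=
  (∑ a ∈ range d, (a : ℚ) ^ i + ∑ a ∈ Ico 1 (d + 1), (a : ℚ) ^ i) / 2

-- Averaging the two Bernoulli conventions removes the term of index `1`, hence all odd indices.
lemma trapezoidalPowerSum_eq (i d : ℕ) :
    trapezoidalPowerSum i d = ∑ l ∈ range (i + 1),
      (bernoulli l + bernoulli' l) / 2 * (i + 1).choose l / (i + 1) * (d : ℚ) ^ (i + 1 - l) := by
  rw [trapezoidalPowerSum, sum_range_pow, sum_Ico_pow, ← sum_add_distrib, sum_div]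
  exact sum_congr rfl fun l _ => by ring

lemma bernoulli_add_bernoulli'_of_odd {l : ℕ} (hl : Odd l) : bernoulli l + bernoulli' l = 0 := by
  rw [bernoulli'_eq_bernoulli, hl.neg_one_pow]
  ring

lemma lambert_pow_mul_trapezoidalPowerSum (i j : ℕ) :
    lambert (fun d => (d : ℚ) ^ j * trapezoidalPowerSum i d) = ∑ l ∈ range (i + 1),
      ((bernoulli l + bernoulli' l) / 2 * (i + 1).choose l / (i + 1)) •
        sigmaSeries (i + j + 1 - l) := by
  simp only [sigmaSeries, ← map_smul, ← map_sum]
  congr 1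
  ext d
  simp only [trapezoidalPowerSum_eq, mul_sum, Finset.sum_apply, Pi.smul_apply, smul_eq_mul]
  refine sum_congr rfl fun l hl => ?_
  have hl : l ≤ i := Nat.lt_succ_iff.mp (mem_range.mp hl)
  rw [show i + j + 1 - l = j + (i + 1 - l) by lia, pow_add]
  ring

lemma lambert_pow_mul_trapezoidalPowerSum_sub_mem (A : Submodule ℚ (PowerSeries ℚ)) {i j : ℕ}
    (hij : Even (i + j)) (hA : ∀ r, Odd r → r < i + j + 1 → sigmaSeries r ∈ A) :
    lambert (fun d => (d : ℚ) ^ j * trapezoidalPowerSum i d) -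
      ((i : ℚ) + 1)⁻¹ • sigmaSeries (i + j + 1) ∈ A := by
  rw [lambert_pow_mul_trapezoidalPowerSum, sum_range_succ']
  simp only [bernoulli_zero, bernoulli'_zero, Nat.choose_zero_right, Nat.cast_one, tsub_zero]
  norm_num only [one_div, add_sub_cancel_right]
  refine A.sum_mem fun l hl => ?_
  rcases Nat.even_or_odd (l + 1) with heven | hodd
  · refine A.smul_mem _ (hA _ ?_ (by lia))
    have hl := mem_range.mp hl
    grind
  · simp [bernoulli_add_bernoulli'_of_odd hodd]

end TrapezoidalPowerSums

section TriangleForms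

open Finset MvPolynomial

variable {P : MvPolynomial (Fin 2) ℚ}

lemma eval_pair_eq_sum {R : Type*} [CommSemiring R] (Q : MvPolynomial (Fin 2) R) (x y : R) :
    eval ![x, y] Q = ∑ e ∈ Q.support, Q.coeff e * (x ^ e 0 * y ^ e 1) := by
  simp [eval_eq', Fin.prod_univ_two]

/-- `IsTriangleForm P` says that, in the coordinates `x + y + z = 0`, the polynomial function
`P(x, y)` is invariant under `(x, y, z) ↦ (x, z, y)` and `(x, y, z) ↦ (-z, -y, -x)`, and vanishes
on the line `z = 0`. Such a `P` can be fed into `sum_bilinearReps_eq_add`. -/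
structure IsTriangleForm (P : MvPolynomial (Fin 2) ℚ) : Prop where
  eval_right : ∀ x y, eval ![x, y] P = eval ![x, -(x + y)] P
  eval_left : ∀ x y, eval ![x, y] P = eval ![x + y, -y] P
  eval_neg : ∀ x, eval ![x, -x] P = 0

/-- The rational number `∫₀¹ P(t, -1) dt`. -/
noncomputable def unitIntegral (P : MvPolynomial (Fin 2) ℚ) : ℚ :=
  ∑ e ∈ P.support, P.coeff e * (-1) ^ e 1 * ((e 0 : ℚ) + 1)⁻¹

lemma cast_unitIntegral (P : MvPolynomial (Fin 2) ℚ) :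
    (unitIntegral P : ℝ) = ∫ t in (0 : ℝ)..1, aeval ![t, -1] P := by
  have expand (t : ℝ) : aeval ![t, -1] P =
      ∑ e ∈ P.support, (P.coeff e * (-1) ^ e 1 : ℝ) * t ^ e 0 := by
    rw [aeval_def, eval₂_eq']
    refine sum_congr rfl fun e _ => ?_
    simp only [Fin.prod_univ_two, Matrix.cons_val_zero, Matrix.cons_val_one, eq_ratCast]
    ring
  simp only [expand]
  rw [intervalIntegral.integral_finsetSum fun e _ =>
    Continuous.intervalIntegrable (by fun_prop) _ _]
  simp [unitIntegral, intervalIntegral.integral_const_mul, integral_pow]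

lemma IsTriangleForm.sum_smul_sigmaSeries_mul (hP : IsTriangleForm P) :
    ∑ e ∈ P.support, (P.coeff e * (1 - (-1) ^ e 1)) • (sigmaSeries (e 0) * sigmaSeries (e 1)) =
      lambert fun d => ∑ a ∈ Ico 1 d, eval ![(a : ℚ), -d] P := by
  ext n
  have h := sum_bilinearReps_eq_add n (fun a b => eval ![(a : ℚ), b] P)
    (fun a b => eval ![(a : ℚ), -b] P) (fun a b => by push_cast; exact hP.eval_right a b)
    (fun a b => by push_cast; exact hP.eval_left a b) (fun a => hP.eval_neg a)
  rw [coeff_lambert, ← sub_eq_of_eq_add' h, ← sum_sub_distrib]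
  simp only [eval_pair_eq_sum, ← sum_sub_distrib, map_sum, map_smul, sigmaSeries,
    coeff_lambert_mul_lambert, smul_eq_mul, mul_sum]
  rw [sum_comm]
  refine sum_congr rfl fun q _ => sum_congr rfl fun e _ => ?_
  rw [neg_pow (q.2.1 : ℚ)]
  ring

lemma IsTriangleForm.sum_Ico_eval (hP : IsTriangleForm P) (d : ℕ) :
    ∑ a ∈ Ico 1 d, eval ![(a : ℚ), -d] P = ∑ e ∈ P.support,
      P.coeff e * (-1) ^ e 1 * ((d : ℚ) ^ e 1 * trapezoidalPowerSum (e 0) d) := by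
  have eval_zero (y : ℚ) : eval ![0, y] P = 0 := by
    simpa [hP.eval_neg] using hP.eval_left 0 y
  have left_sum : ∑ a ∈ range d, eval ![(a : ℚ), -d] P = ∑ a ∈ Ico 1 d, eval ![(a : ℚ), -d] P := by
    rcases d.eq_zero_or_pos with rfl | hd
    · simp
    · rw [range_eq_Ico, sum_eq_sum_Ico_succ_bot hd]
      simp [eval_zero]
  have right_sum :
      ∑ a ∈ Ico 1 (d + 1), eval ![(a : ℚ), -d] P = ∑ a ∈ Ico 1 d, eval ![(a : ℚ), -d] P := by
    rcases d.eq_zero_or_pos with rfl | hd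
    · simp
    · rw [sum_Ico_succ_top hd, hP.eval_neg, add_zero]
  calc ∑ a ∈ Ico 1 d, eval ![(a : ℚ), -d] P
      = (∑ a ∈ range d, eval ![(a : ℚ), -d] P +
          ∑ a ∈ Ico 1 (d + 1), eval ![(a : ℚ), -d] P) / 2 := by
        rw [left_sum, right_sum, add_self_div_two]
    _ = _ := by
        simp only [eval_pair_eq_sum]
        rw [sum_comm, sum_comm (s := Ico 1 (d + 1)), ← sum_add_distrib, sum_div]
        refine sum_congr rfl fun e _ => ?_
        simp only [trapezoidalPowerSum, neg_pow (d : ℚ), ← mul_sum, ← sum_mul]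
        ring

lemma IsTriangleForm.lambert_sum_Ico_eval (hP : IsTriangleForm P) :
    (lambert fun d => ∑ a ∈ Ico 1 d, eval ![(a : ℚ), -d] P) =
      ∑ e ∈ P.support, (P.coeff e * (-1) ^ e 1) •
        lambert fun d => (d : ℚ) ^ e 1 * trapezoidalPowerSum (e 0) d := by
  simp only [hP.sum_Ico_eval, ← map_smul, ← map_sum]
  congr 1
  ext d
  simp

lemma IsTriangleForm.unitIntegral_smul_sigmaSeries_mem (hP : IsTriangleForm P) {N : ℕ}
    (hN : Even N) (hhom : P.IsHomogeneous N) (A : Subalgebra ℚ (PowerSeries ℚ))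
    (hA : ∀ r, Odd r → r < N + 1 → sigmaSeries r ∈ A) :
    unitIntegral P • sigmaSeries (N + 1) ∈ A := by
  have degree {e} (he : e ∈ P.support) : e 0 + e 1 = N := by
    rw [← Fin.sum_univ_two, ← Finsupp.degree_eq_sum]
    by_contra hne
    exact mem_support_iff.mp he (hhom.coeff_eq_zero hne)
  have products_mem : ∑ e ∈ P.support,
      (P.coeff e * (1 - (-1) ^ e 1)) • (sigmaSeries (e 0) * sigmaSeries (e 1)) ∈ A := by
    refine A.sum_mem fun e he => ?_
    have hdeg := degree he
    rcases Nat.even_or_odd (e 1) with heven | hodd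
    · simp [heven.neg_one_pow]
    · exact A.smul_mem (A.mul_mem (hA _ (by grind) (by lia)) (hA _ hodd (by lia))) _
  have remainders_mem : ∑ e ∈ P.support, (P.coeff e * (-1) ^ e 1) •
      (lambert (fun d => (d : ℚ) ^ e 1 * trapezoidalPowerSum (e 0) d) -
        ((e 0 : ℚ) + 1)⁻¹ • sigmaSeries (N + 1)) ∈ A := by
    refine A.sum_mem fun e he => A.smul_mem ?_ _
    obtain rfl := degree he
    exact lambert_pow_mul_trapezoidalPowerSum_sub_mem (Subalgebra.toSubmodule A) hN hA
  convert A.sub_mem products_mem remainders_mem using 1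
  simp only [hP.sum_smul_sigmaSeries_mul, hP.lambert_sum_Ico_eval, unitIntegral, sum_smul,
    smul_sub, sum_sub_distrib, sub_sub_cancel, smul_smul]

end TriangleForms

section QuasiModularForms

open MvPolynomial

/-- The form `x² y² (x + y)² (x² + x y + y²)ᵐ` of degree `2m + 6`, an `IsTriangleForm` with
positive `unitIntegral`. -/
noncomputable def triangleForm (m : ℕ) : MvPolynomial (Fin 2) ℚ :=
  (X 0 * X 1 * (X 0 + X 1)) ^ 2 * (X 0 ^ 2 + X 0 * X 1 + X 1 ^ 2) ^ m

lemma aeval_triangleForm {R : Type*} [CommRing R] [Algebra ℚ R] (m : ℕ) (x y : R) :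
    aeval ![x, y] (triangleForm m) = (x * y * (x + y)) ^ 2 * (x ^ 2 + x * y + y ^ 2) ^ m := by
  simp [triangleForm]

lemma isTriangleForm_triangleForm (m : ℕ) : IsTriangleForm (triangleForm m) where
  eval_right x y := by
    simp only [← aeval_eq_eval, aeval_triangleForm]
    ring_nf
  eval_left x y := by
    simp only [← aeval_eq_eval, aeval_triangleForm]
    ring_nf
  eval_neg x := by simp [triangleForm]

lemma triangleForm_isHomogeneous (m : ℕ) : (triangleForm m).IsHomogeneous (2 * m + 6) := by
  have hX (i : Fin 2) : (X i : MvPolynomial (Fin 2) ℚ).IsHomogeneous 1 := isHomogeneous_X ℚ i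
  have cubic := ((hX 0).mul (hX 1)).mul ((hX 0).add (hX 1))
  have quadratic := (((hX 0).pow 2).add ((hX 0).mul (hX 1))).add ((hX 1).pow 2)
  rw [show 2 * m + 6 = (1 + 1 + 1) * 2 + 1 * 2 * m by ring]
  exact (cubic.pow 2).mul (quadratic.pow m)

lemma unitIntegral_triangleForm_pos (m : ℕ) : 0 < unitIntegral (triangleForm m) := by
  rw [← Rat.cast_pos (K := ℝ), cast_unitIntegral]
  simp only [aeval_triangleForm]
  refine intervalIntegral.intervalIntegral_pos_of_pos_on
    (Continuous.intervalIntegrable (by fun_prop) _ _) (fun t ht => ?_) one_pos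
  have hcubic : t * -1 * (t + -1) ≠ 0 := by
    have := ht.1.ne'
    have := ht.2.ne
    grind
  have hquadratic : 0 < t ^ 2 + t * -1 + (-1) ^ 2 := by nlinarith [sq_nonneg (t - 1)]
  positivity

/-- The `ℚ`-algebra of `q`-expansions of quasi-modular forms for `SL₂(ℤ)`. -/
noncomputable abbrev quasiModularForms : Subalgebra ℚ (PowerSeries ℚ) :=
  Algebra.adjoin ℚ {E2, E4, E6}

lemma sigmaSeries_mem_of_mk_mem (A : Subalgebra ℚ (PowerSeries ℚ)) {c : ℚ} (hc : c ≠ 0) {r : ℕ}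
    (hA : (PowerSeries.mk fun n => if n = 0 then 1 else c * sigma' r n) ∈ A) :
    sigmaSeries r ∈ A := by
  have eq_smul : sigmaSeries r =
      c⁻¹ • ((PowerSeries.mk fun n => if n = 0 then 1 else c * sigma' r n) - 1) := by
    ext n
    rcases eq_or_ne n 0 with rfl | hn
    · simp [sigmaSeries, coeff_lambert]
    · simp [sigmaSeries, coeff_lambert, PowerSeries.coeff_one, hn, sigma', hc]
  rw [eq_smul]
  exact A.smul_mem (A.sub_mem hA A.one_mem) _

theorem sigmaSeries_mem_quasiModularForms {r : ℕ} (hr : Odd r) :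
    sigmaSeries r ∈ quasiModularForms := by
  have mem_of_generator {f : PowerSeries ℚ} (hf : f ∈ ({E2, E4, E6} : Set (PowerSeries ℚ))) :
      f ∈ quasiModularForms := Algebra.subset_adjoin hf
  induction r using Nat.strong_induction_on with
  | _ r ih =>
    obtain ⟨t, rfl⟩ := hr
    match t with
    | 0 => exact sigmaSeries_mem_of_mk_mem _ (c := -24) (by simp) (mem_of_generator (by simp [E2]))
    | 1 => exact sigmaSeries_mem_of_mk_mem _ (c := 240) (by simp) (mem_of_generator (by simp [E4]))
    | 2 => exact sigmaSeries_mem_of_mk_mem _ (c := -504) (by simp) (mem_of_generator (by simp [E6]))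
    | m + 3 =>
      have h := (isTriangleForm_triangleForm m).unitIntegral_smul_sigmaSeries_mem (by grind)
        (triangleForm_isHomogeneous m) quasiModularForms fun r hr hlt => ih r (by lia) hr
      have hne : unitIntegral (triangleForm m) ≠ 0 := (unitIntegral_triangleForm_pos m).ne'
      rw [show 2 * (m + 3) = 2 * m + 6 by ring]
      simpa [smul_smul, hne] using
        quasiModularForms.smul_mem h (unitIntegral (triangleForm m))⁻¹

end QuasiModularForms

section SymmetricFunctions

open Finset PowerSeries

lemma mul_sum_powersetCard_prod_eq {ι R : Type*} [CommRing R] (s : Finset ι) (x : ι → R) (k : ℕ) :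
    (k : R) * ∑ t ∈ s.powersetCard k, ∏ i ∈ t, x i = (-1) ^ (k + 1) *
      ∑ a ∈ antidiagonal k with a.1 < k,
        (-1) ^ a.1 * (∑ t ∈ s.powersetCard a.1, ∏ i ∈ t, x i) * ∑ i ∈ s, x i ^ a.2 := by
  have aeval_esymm (j : ℕ) : MvPolynomial.aeval (fun i : s => x i) (MvPolynomial.esymm s ℤ j) =
      ∑ t ∈ s.powersetCard j, ∏ i ∈ t, x i := by
    rw [MvPolynomial.aeval_esymm_eq_multiset_esymm, ← esymm_map_val]
    congr 1
    exact Multiset.attach_map_val' s.val x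
  have aeval_psum (j : ℕ) : MvPolynomial.aeval (fun i : s => x i) (MvPolynomial.psum s ℤ j) =
      ∑ i ∈ s, x i ^ j := by
    simp [MvPolynomial.psum, sum_attach s fun i => x i ^ j]
  simpa [aeval_esymm, aeval_psum] using
    congrArg (MvPolynomial.aeval fun i : s => x i) (MvPolynomial.mul_esymm_eq_sum s ℤ k)

lemma sum_powersetCard_prod_eq_sum_strictMono {α R : Type*} [LinearOrder α] [Fintype α]
    [CommSemiring R] (x : α → R) (k : ℕ) :
    ∑ t ∈ (univ : Finset α).powersetCard k, ∏ a ∈ t, x a =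
      ∑ f : Fin k → α with StrictMono f, ∏ i, x (f i) := by
  symm
  refine sum_bij (fun f _ => univ.image f) ?_ ?_ ?_ ?_
  · intro f hf
    simp [card_image_of_injective _ (mem_filter.mp hf).2.injective]
  · intro f hf g hg hfg
    refine (StrictMono.range_inj (mem_filter.mp hf).2 (mem_filter.mp hg).2).mp ?_
    simpa using congrArg (SetLike.coe : Finset α → Set α) hfg
  · intro t ht
    have hcard := (mem_powersetCard.mp ht).2
    exact ⟨t.orderEmbOfFin hcard, by simp [(t.orderEmbOfFin hcard).strictMono], by simp⟩
  · intro f hf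
    rw [prod_image (mem_filter.mp hf).2.injective.injOn]

variable {R : Type*} [CommRing R]

/-- The elementary symmetric function `∑_{m₁ < ⋯ < m_k} x_{m₁} ⋯ x_{m_k}` of a sequence of power
series such that `X ^ m ∣ x m`; the latter makes the indices `m > n` irrelevant to the
coefficient of `X ^ n`. -/
noncomputable def elemSymm (x : ℕ → R⟦X⟧) (k : ℕ) : R⟦X⟧ :=
  .mk fun n => coeff n (∑ t ∈ (range (n + 1)).powersetCard k, ∏ m ∈ t, x m)

/-- The power sum `∑ₘ x_m ^ j`, `j ≥ 1`, of a sequence of power series such that `X ^ m ∣ x m`. -/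
noncomputable def powerSum (x : ℕ → R⟦X⟧) (j : ℕ) : R⟦X⟧ :=
  .mk fun n => coeff n (∑ m ∈ range (n + 1), x m ^ j)

variable {x : ℕ → R⟦X⟧}

lemma coeff_elemSymm (hx : ∀ m, X ^ m ∣ x m) {n N : ℕ} (hn : n < N) (k : ℕ) :
    coeff n (elemSymm x k) = coeff n (∑ t ∈ (range N).powersetCard k, ∏ m ∈ t, x m) := by
  rw [elemSymm, coeff_mk, map_sum, map_sum]
  refine sum_subset (powersetCard_mono (by grind)) fun t ht hnt => ?_
  obtain ⟨m, hmt, hm⟩ : ∃ m ∈ t, n < m := by grind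
  exact X_pow_dvd_iff.mp ((hx m).trans (dvd_prod_of_mem x hmt)) n hm

lemma coeff_powerSum (hx : ∀ m, X ^ m ∣ x m) {n N : ℕ} (hn : n < N) {j : ℕ} (hj : j ≠ 0) :
    coeff n (powerSum x j) = coeff n (∑ m ∈ range N, x m ^ j) := by
  rw [powerSum, coeff_mk, map_sum, map_sum]
  refine sum_subset (by grind) fun m _ hm => ?_
  exact X_pow_dvd_iff.mp ((hx m).trans (dvd_pow_self _ hj)) n (by simpa using hm)

lemma elemSymm_zero (x : ℕ → R⟦X⟧) : elemSymm x 0 = 1 := by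
  ext n
  simp [elemSymm]

theorem mul_elemSymm_eq_sum (hx : ∀ m, X ^ m ∣ x m) (k : ℕ) :
    (k : R⟦X⟧) * elemSymm x k = (-1) ^ (k + 1) * ∑ a ∈ antidiagonal k with a.1 < k,
      (-1) ^ a.1 * elemSymm x a.1 * powerSum x a.2 := by
  ext n
  let I : Ideal R⟦X⟧ := Ideal.span {X ^ (n + 1)}
  have mk_eq {f g : R⟦X⟧} :
      Ideal.Quotient.mk I f = Ideal.Quotient.mk I g ↔ ∀ i < n + 1, coeff i f = coeff i g := by
    simp only [I, Ideal.Quotient.eq, Ideal.mem_span_singleton, X_pow_dvd_iff, map_sub, sub_eq_zero]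
  have mk_elemSymm (j : ℕ) := mk_eq.mpr fun i hi => coeff_elemSymm hx hi j
  have mk_powerSum {j : ℕ} (hj : j ≠ 0) := mk_eq.mpr fun i hi => coeff_powerSum hx hi hj
  refine mk_eq.mp ?_ n n.lt_succ_self
  rw [map_mul, mk_elemSymm, ← map_mul, mul_sum_powersetCard_prod_eq]
  simp only [map_mul, map_sum (Ideal.Quotient.mk I)]
  congr 1
  refine sum_congr rfl fun a ha => ?_
  have ha : a.2 ≠ 0 := by grind [HasAntidiagonal.mem_antidiagonal]
  simp only [mk_elemSymm, mk_powerSum ha, map_sum]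

theorem elemSymm_mem [Algebra ℚ R] (A : Subalgebra ℚ R⟦X⟧) (hx : ∀ m, X ^ m ∣ x m)
    (hA : ∀ j, j ≠ 0 → powerSum x j ∈ A) (k : ℕ) : elemSymm x k ∈ A := by
  induction k using Nat.strong_induction_on with
  | _ k ih =>
    rcases eq_or_ne k 0 with rfl | hk
    · rw [elemSymm_zero]
      exact A.one_mem
    · have newton : (k : ℚ) • elemSymm x k ∈ A := by
        rw [Nat.cast_smul_eq_nsmul, nsmul_eq_mul, mul_elemSymm_eq_sum hx]
        have neg_one_pow_mem (i : ℕ) : (-1) ^ i ∈ A := A.pow_mem (A.neg_mem A.one_mem) i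
        refine A.mul_mem (neg_one_pow_mem _) (A.sum_mem fun a ha => ?_)
        simp only [mem_filter, HasAntidiagonal.mem_antidiagonal] at ha
        exact A.mul_mem (A.mul_mem (neg_one_pow_mem _) (ih _ ha.2)) (hA _ (by lia))
      have hk : (k : ℚ) ≠ 0 := Nat.cast_ne_zero.mpr hk
      simpa [smul_smul, hk] using A.smul_mem newton (k : ℚ)⁻¹

end SymmetricFunctions

section OddPolynomialFunctions

/-- The space of odd polynomial functions on `ℕ` with rational coefficients. -/
def oddPolynomialFunctions : Submodule ℚ (ℕ → ℚ) :=
  .span ℚ (Set.range fun i s => (s : ℚ) ^ (2 * i + 1))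

lemma sq_mul_mem_oddPolynomialFunctions {f : ℕ → ℚ} (hf : f ∈ oddPolynomialFunctions) :
    (fun s : ℕ => (s : ℚ) ^ 2 * f s) ∈ oddPolynomialFunctions := by
  suffices oddPolynomialFunctions ≤
      oddPolynomialFunctions.comap (LinearMap.mulLeft ℚ fun s : ℕ => (s : ℚ) ^ 2) from this hf
  refine Submodule.span_le.mpr ?_
  rintro _ ⟨i, rfl⟩
  refine Submodule.subset_span ⟨i + 1, ?_⟩
  ext s
  simp only [LinearMap.mulLeft_apply, Pi.mul_apply]
  ring

lemma choose_add_succ_eq (s k : ℕ) : ((s + (k + 1)).choose (2 * (k + 1) + 1) : ℚ) =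
    ((2 * k + 2) * (2 * k + 3) : ℚ)⁻¹ * ((s ^ 2 - (k + 1) ^ 2) * (s + k).choose (2 * k + 1)) := by
  have top := congrArg (Nat.cast (R := ℚ)) (Nat.add_one_mul_choose_eq (s + k) (2 * k + 1))
  have bottom : ((s + k + 1).choose (2 * k + 3) : ℚ) * (2 * k + 3) =
      (s + k + 1).choose (2 * k + 2) * (s - (k + 1)) := by
    have h := congrArg (Nat.cast (R := ℚ)) (Nat.choose_succ_right_eq (s + k + 1) (2 * k + 2))
    rcases le_or_gt (k + 1) s with hs | hs
    · rw [show s + k + 1 - (2 * k + 2) = s - (k + 1) by lia] at h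
      push_cast [Nat.cast_sub hs] at h
      linear_combination h
    · rw [Nat.choose_eq_zero_of_lt (by lia), Nat.choose_eq_zero_of_lt (by lia)]
      simp
  push_cast at top
  rw [show s + (k + 1) = s + k + 1 by ring, show 2 * (k + 1) + 1 = 2 * k + 3 by ring]
  field_simp
  linear_combination (2 * k + 2 : ℚ) * bottom - ((s : ℚ) - (k + 1)) * top

lemma choose_mem_oddPolynomialFunctions (k : ℕ) :
    (fun s => ((s + k).choose (2 * k + 1) : ℚ)) ∈ oddPolynomialFunctions := by
  induction k with
  | zero => exact Submodule.subset_span ⟨0, by simp⟩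
  | succ k ih =>
    simp only [choose_add_succ_eq, sub_mul]
    exact Submodule.smul_mem _ _ <|
      Submodule.sub_mem _ (sq_mul_mem_oddPolynomialFunctions ih) (Submodule.smul_mem _ _ ih)

lemma lambert_mem_quasiModularForms {f : ℕ → ℚ} (hf : f ∈ oddPolynomialFunctions) :
    lambert f ∈ quasiModularForms := by
  suffices oddPolynomialFunctions ≤
      (Subalgebra.toSubmodule quasiModularForms).comap lambert from this hf
  refine Submodule.span_le.mpr ?_
  rintro _ ⟨i, rfl⟩
  exact sigmaSeries_mem_quasiModularForms ⟨i, rfl⟩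

end OddPolynomialFunctions

section MacMahon

open Finset PowerSeries

/-- MacMahon's series `q^m / (1 - q^m)^2 = ∑ s q^(s m)`, with the value `0` at `m = 0`. -/
noncomputable def macmahonTerm (m : ℕ) : ℚ⟦X⟧ :=
  .mk fun i => if m ∣ i then ((i / m : ℕ) : ℚ) else 0

lemma macmahonTerm_zero : macmahonTerm 0 = 0 := by
  ext i
  simp [macmahonTerm]

lemma macmahonTerm_eq_expand {m : ℕ} (hm : m ≠ 0) :
    macmahonTerm m = expand m hm (macmahonTerm 1) := by
  ext i
  simp [macmahonTerm, coeff_expand]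

lemma X_pow_dvd_macmahonTerm (m : ℕ) : X ^ m ∣ macmahonTerm m := by
  refine X_pow_dvd_iff.mpr fun i hi => ?_
  simp [macmahonTerm, Nat.div_eq_of_lt hi]

lemma macmahonTerm_one : macmahonTerm 1 = X * .mk 1 ^ 2 := by
  rw [show 2 = 1 + 1 from rfl, mk_one_pow_eq_mk_choose_add]
  ext (_ | n)
  · simp [macmahonTerm]
  · rw [coeff_succ_X_mul]
    simp [macmahonTerm, add_comm]

lemma coeff_macmahonTerm_one_pow_succ (k s : ℕ) :
    coeff s (macmahonTerm 1 ^ (k + 1)) = (s + k).choose (2 * k + 1) := by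
  rw [macmahonTerm_one, mul_pow, ← pow_mul, show 2 * (k + 1) = 2 * k + 1 + 1 by ring,
    mk_one_pow_eq_mk_choose_add, coeff_X_pow_mul']
  split_ifs with hs
  · rw [coeff_mk, show 2 * k + 1 + (s - (k + 1)) = s + k by lia]
  · rw [Nat.choose_eq_zero_of_lt (by lia), Nat.cast_zero]

lemma powerSum_macmahonTerm (k : ℕ) : powerSum macmahonTerm (k + 1) =
    lambert fun s => ((s + k).choose (2 * k + 1) : ℚ) := by
  ext n
  have coeff_pow {m : ℕ} (hm : m ∈ Ico 1 (n + 1)) : coeff n (macmahonTerm m ^ (k + 1)) =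
      if m ∣ n then ((n / m + k).choose (2 * k + 1) : ℚ) else 0 := by
    have hm : m ≠ 0 := by grind
    rw [macmahonTerm_eq_expand hm, ← map_pow, coeff_expand, coeff_macmahonTerm_one_pow_succ]
  rw [powerSum, coeff_mk, coeff_lambert, range_eq_Ico, sum_eq_sum_Ico_succ_bot n.succ_pos,
    macmahonTerm_zero, zero_pow k.succ_ne_zero, zero_add, map_sum, sum_congr rfl fun _ => coeff_pow,
    ← sum_filter]
  exact Nat.sum_div_divisors n fun s => ((s + k).choose (2 * k + 1) : ℚ)

theorem powerSum_macmahonTerm_mem_quasiModularForms {j : ℕ} (hj : j ≠ 0) :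
    powerSum macmahonTerm j ∈ quasiModularForms := by
  obtain ⟨k, rfl⟩ := Nat.exists_eq_succ_of_ne_zero hj
  rw [powerSum_macmahonTerm]
  exact lambert_mem_quasiModularForms (choose_mem_oddPolynomialFunctions k)

lemma exists_eq_mul_of_coeff_macmahonTerm_ne_zero {m i : ℕ} (h : coeff i (macmahonTerm m) ≠ 0) :
    ∃ s, 0 < s ∧ 0 < m ∧ i = s * m := by
  have hdvd : m ∣ i := by
    by_contra hdvd
    simp [macmahonTerm, hdvd] at h
  obtain ⟨hi, hm⟩ : 0 < i ∧ 0 < m := by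
    simpa [macmahonTerm, hdvd, Nat.pos_iff_ne_zero] using h
  exact ⟨i / m, Nat.div_pos (Nat.le_of_dvd hi hdvd) hm, hm, (Nat.div_mul_cancel hdvd).symm⟩

lemma coeff_mul_macmahonTerm {m : ℕ} (hm : 0 < m) (s : ℕ) :
    coeff (s * m) (macmahonTerm m) = s := by
  simp [macmahonTerm, hm]

lemma coeff_prod_macmahonTerm {ι : Type*} [Fintype ι] (m : ι → ℕ) (n : ℕ) :
    coeff n (∏ i, macmahonTerm (m i)) = ∑ s : ι → Fin (n + 1) with
      (∀ i, 0 < (s i : ℕ)) ∧ (∀ i, 0 < m i) ∧ ∑ i, (s i : ℕ) * m i = n, ∏ i, ((s i : ℕ) : ℚ) := by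
  rw [coeff_prod]
  symm
  refine sum_of_injOn (fun s => Finsupp.equivFunOnFinite.symm fun i => s i * m i) ?_ ?_ ?_ ?_
  · intro s hs s' _ heq
    obtain ⟨-, hm, -⟩ := (mem_filter.mp hs).2
    ext i
    simpa [(hm i).ne'] using DFunLike.congr_fun heq i
  · intro s hs
    obtain ⟨-, -, hsum⟩ := (mem_filter.mp hs).2
    simp [mem_finsuppAntidiag, hsum]
  · intro l hl hnot
    contrapose! hnot
    have hl : ∑ i, l i = n := by simpa using (mem_finsuppAntidiag.mp hl).1
    have hfactor (i : ι) := exists_eq_mul_of_coeff_macmahonTerm_ne_zero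
      (prod_ne_zero_iff.mp hnot i (mem_univ i))
    choose s hs hm hsm using hfactor
    have hlt (i : ι) : s i < n + 1 := by
      have := single_le_sum (fun i _ => Nat.zero_le (l i)) (mem_univ i)
      have := Nat.le_mul_of_pos_right (s i) (hm i)
      grind
    exact ⟨fun i => ⟨s i, hlt i⟩, mem_filter.mpr ⟨mem_univ _, hs, hm, by simp [← hsm, hl]⟩,
      by ext i; simp [hsm]⟩
  · intro s hs
    obtain ⟨-, hm, -⟩ := (mem_filter.mp hs).2
    exact prod_congr rfl fun i _ => (coeff_mul_macmahonTerm (hm i) _).symm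

theorem elemSymm_macmahonTerm (k : ℕ) :
    elemSymm macmahonTerm k = .mk fun n => (macAcoeff n k : ℚ) := by
  ext n
  have sum_powersetCard_range : ∑ t ∈ (range (n + 1)).powersetCard k, ∏ m ∈ t, macmahonTerm m =
      ∑ t ∈ (univ : Finset (Fin (n + 1))).powersetCard k, ∏ m ∈ t, macmahonTerm m := by
    rw [← Nat.Iio_eq_range, ← Fin.map_valEmbedding_univ, powersetCard_map, sum_map]
    simp
  rw [elemSymm, coeff_mk, coeff_mk, sum_powersetCard_range,
    sum_powersetCard_prod_eq_sum_strictMono fun m : Fin (n + 1) => macmahonTerm m, map_sum,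
    macAcoeff]
  simp only [coeff_prod_macmahonTerm, sum_filter, Fintype.sum_prod_type_right]
  push_cast
  refine sum_congr rfl fun f _ => ?_
  by_cases hf : StrictMono f
  · have hf' : StrictMono fun i => (f i : ℕ) := hf
    simp only [hf, hf', if_true, true_and]
    congr!
  · have hf' : ¬ StrictMono fun i => (f i : ℕ) := hf
    simp [hf, hf']

end MacMahon

/-- MacMahon's generating function `A_k = ∑_{n ≥ 1} a_{n,k} qⁿ` lies in the ring of
quasi-modular forms, i.e. the `ℚ`-subalgebra of `ℚ⟦q⟧` generated by `E₂`, `E₄` and `E₆`. -/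
theorem stmt6 (k : ℕ) (hk : 1 ≤ k) :
    (PowerSeries.mk fun n => (macAcoeff n k : ℚ)) ∈
      Algebra.adjoin ℚ ({E2, E4, E6} : Set (PowerSeries ℚ)) := by
  rw [← elemSymm_macmahonTerm]
  exact elemSymm_mem quasiModularForms X_pow_dvd_macmahonTerm
    (fun _ => powerSum_macmahonTerm_mem_quasiModularForms) k
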